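/- arXiv:2209.09126 — 2 statements merged into one kernel-verified Lean document; each statement's English description precedes it below -/
import Mathlib

section
/- Let d ∈ ℕ, t ≥ 0 and N > t + d. Then there exist constants c, C > 0 depending only on N, d, t such that for every invertible d×d real matrix T: c / (α_d(T)^t |det(T)|) ≤ ∫_{ℝ^d} (1 + ‖Tx‖)^{-N} ‖x‖^t dx ≤ C / (α_d(T)^t |det(T)|). -/
/-!
Substituting `y = T x` turns the integral into `|det T|⁻¹ ∫ (1 + ‖y‖)^(-N) ‖T⁻¹ y‖^t dy`, so it
suffices to compare `∫ (1 + ‖y‖)^(-N) ‖L y‖^t dy` with `‖L‖^t` for an arbitrary linear map `L`.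
From above, `‖L y‖ ≤ ‖L‖ (1 + ‖y‖)` and `N - t` exceeds the dimension. From below, around a
near-maximizer of `‖L ·‖` on the unit ball there is a ball of fixed radius on which
`‖L y‖ ≥ ‖L‖ / 4`; its position depends on `L`, but its volume does not.
-/

open MeasureTheory

noncomputable section

namespace SelfAffine

/-- Euclidean operator norm of a `d × d` real matrix. -/
def opNorm {d : ℕ} (A : Matrix (Fin d) (Fin d) ℝ) : ℝ :=
  ‖Matrix.toEuclideanCLM (𝕜 := ℝ) A‖

/-- smallest singular value of an invertible matrix, via `α_d(A) = ‖A⁻¹‖⁻¹`. -/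
def alphaMin {d : ℕ} (A : Matrix (Fin d) (Fin d) ℝ) : ℝ := (opNorm A⁻¹)⁻¹

open Metric Module

section PointwiseBounds

variable {𝕜 E F : Type*} [SeminormedAddCommGroup F]

lemma one_add_norm_rpow_mul_norm_apply_rpow_le [NontriviallyNormedField 𝕜]
    [SeminormedAddCommGroup E] [NormedSpace 𝕜 E] [NormedSpace 𝕜 F] {t : ℝ} (ht : 0 ≤ t) (N : ℝ)
    (L : E →L[𝕜] F) (y : E) :
    (1 + ‖y‖) ^ (-N) * ‖L y‖ ^ t ≤ (1 + ‖y‖) ^ (-(N - t)) * ‖L‖ ^ t := by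
  have hy : 0 < 1 + ‖y‖ := by positivity
  calc (1 + ‖y‖) ^ (-N) * ‖L y‖ ^ t ≤ (1 + ‖y‖) ^ (-N) * (‖L‖ * (1 + ‖y‖)) ^ t := by
        gcongr
        exact L.le_opNorm_of_le (by linarith)
    _ = (1 + ‖y‖) ^ (-N) * (1 + ‖y‖) ^ t * ‖L‖ ^ t := by
        rw [Real.mul_rpow (norm_nonneg _) hy.le]
        ring
    _ = (1 + ‖y‖) ^ (-(N - t)) * ‖L‖ ^ t := by
        rw [← Real.rpow_add hy, neg_add_eq_sub, neg_sub]

lemma exists_forall_mem_ball_norm_div_four_le_norm_apply [DenselyNormedField 𝕜]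
    [NormedAddCommGroup E] [NormedSpace 𝕜 E] [NormedSpace 𝕜 F] (L : E →L[𝕜] F) :
    ∃ v : E, ‖v‖ ≤ 1 ∧ ∀ y ∈ ball v (1 / 4), ‖L‖ / 4 ≤ ‖L y‖ := by
  obtain ⟨v, hv, hLv⟩ : ∃ v : E, ‖v‖ ≤ 1 ∧ ‖L‖ / 2 ≤ ‖L v‖ := by
    rcases (norm_nonneg L).eq_or_lt with hL | hL
    · exact ⟨0, by simp, by simp [← hL]⟩
    · obtain ⟨v, hv, hLv⟩ := L.exists_lt_apply_of_lt_opNorm (half_lt_self hL)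
      exact ⟨v, hv.le, hLv.le⟩
  refine ⟨v, hv, fun y hy => ?_⟩
  have hdist : ‖L v - L y‖ ≤ ‖L‖ * (1 / 4) := by
    rw [← map_sub]
    exact L.le_opNorm_of_le (mem_ball_iff_norm'.1 hy).le
  linarith [norm_sub_norm_le (L v) (L y)]

end PointwiseBounds

section Integrals

variable {E : Type*} [NormedAddCommGroup E] [NormedSpace ℝ E] [FiniteDimensional ℝ E]
  [MeasurableSpace E] [BorelSpace E] (μ : Measure E) [μ.IsAddHaarMeasure]

lemma integral_one_add_norm_rpow_pos {r : ℝ} (hr : finrank ℝ E < r) :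
    0 < ∫ y, (1 + ‖y‖) ^ (-r) ∂μ := by
  have hcont : Continuous fun y : E => (1 + ‖y‖) ^ (-r) :=
    .rpow_const (by fun_prop) fun y => .inl (by positivity)
  exact integral_pos_of_integrable_nonneg_nonzero (x := 0) hcont (integrable_one_add_norm hr)
    (fun y => by positivity) (by simp)

lemma integral_comp_continuousLinearEquiv {G : Type*} [NormedAddCommGroup G] [NormedSpace ℝ G]
    (T : E ≃L[ℝ] E) (g : E → G) :
    ∫ x, g (T x) ∂μ = |(T : E →L[ℝ] E).det|⁻¹ • ∫ y, g y ∂μ := by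
  have hdet : (T : E →L[ℝ] E).det ≠ 0 := T.toLinearEquiv.isUnit_det'.ne_zero
  have hmap : μ.map T = ENNReal.ofReal |(T : E →L[ℝ] E).det⁻¹| • μ :=
    Measure.map_linearMap_addHaar_eq_smul_addHaar μ hdet
  have hemb : MeasurableEmbedding T := T.toHomeomorph.measurableEmbedding
  rw [← hemb.integral_map, hmap, integral_smul_measure, ENNReal.toReal_ofReal (abs_nonneg _),
    abs_inv]

variable {F : Type*} [SeminormedAddCommGroup F] [NormedSpace ℝ F] {t N : ℝ}

lemma integrable_one_add_norm_rpow_mul_norm_apply_rpow (ht : 0 ≤ t) (hN : t + finrank ℝ E < N)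
    (L : E →L[ℝ] F) : Integrable (fun y => (1 + ‖y‖) ^ (-N) * ‖L y‖ ^ t) μ := by
  have hcont : Continuous fun y => (1 + ‖y‖) ^ (-N) * ‖L y‖ ^ t :=
    .mul (.rpow_const (by fun_prop) fun y => .inl (by positivity))
      (.rpow_const (by fun_prop) fun _ => .inr ht)
  refine ((integrable_one_add_norm (lt_sub_iff_add_lt'.2 hN)).mul_const (‖L‖ ^ t)).mono'
    hcont.aestronglyMeasurable (.of_forall fun y => ?_)
  rw [Real.norm_of_nonneg (by positivity)]
  exact one_add_norm_rpow_mul_norm_apply_rpow_le ht N L y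

lemma integral_one_add_norm_rpow_mul_norm_apply_rpow_le (ht : 0 ≤ t) (hN : t + finrank ℝ E < N)
    (L : E →L[ℝ] F) :
    ∫ y, (1 + ‖y‖) ^ (-N) * ‖L y‖ ^ t ∂μ ≤ (∫ y, (1 + ‖y‖) ^ (-(N - t)) ∂μ) * ‖L‖ ^ t := by
  rw [← integral_mul_const]
  exact integral_mono (integrable_one_add_norm_rpow_mul_norm_apply_rpow μ ht hN L)
    ((integrable_one_add_norm (lt_sub_iff_add_lt'.2 hN)).mul_const _)
    (one_add_norm_rpow_mul_norm_apply_rpow_le ht N L)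

lemma le_integral_one_add_norm_rpow_mul_norm_apply_rpow (ht : 0 ≤ t) (hN : t + finrank ℝ E < N)
    (L : E →L[ℝ] F) :
    μ.real (ball 0 (1 / 4)) * (9 / 4) ^ (-N) * (1 / 4) ^ t * ‖L‖ ^ t ≤
      ∫ y, (1 + ‖y‖) ^ (-N) * ‖L y‖ ^ t ∂μ := by
  have hN₀ : -N ≤ 0 := by linarith [(finrank ℝ E).cast_nonneg (α := ℝ)]
  have hint := integrable_one_add_norm_rpow_mul_norm_apply_rpow μ ht hN L
  obtain ⟨v, hv, hL⟩ := exists_forall_mem_ball_norm_div_four_le_norm_apply L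
  have hnorm : ∀ y ∈ ball v (1 / 4), 1 + ‖y‖ ≤ 9 / 4 := fun y hy => by
    linarith [norm_sub_norm_le y v, mem_ball_iff_norm.1 hy]
  calc μ.real (ball 0 (1 / 4)) * (9 / 4) ^ (-N) * (1 / 4) ^ t * ‖L‖ ^ t
      = ∫ _ in ball v (1 / 4), (9 / 4) ^ (-N) * (‖L‖ / 4) ^ t ∂μ := by
        rw [setIntegral_const, Measure.addHaar_real_ball_center μ v, smul_eq_mul,
          div_eq_mul_one_div ‖L‖, Real.mul_rpow (norm_nonneg _) (by norm_num)]
        ring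
    _ ≤ ∫ y in ball v (1 / 4), (1 + ‖y‖) ^ (-N) * ‖L y‖ ^ t ∂μ :=
        setIntegral_mono_on (integrableOn_const measure_ball_lt_top.ne) hint.integrableOn
          measurableSet_ball fun y hy => mul_le_mul
            (Real.rpow_le_rpow_of_nonpos (by positivity) (hnorm y hy) hN₀)
            (Real.rpow_le_rpow (by positivity) (hL y hy) ht) (by positivity) (by positivity)
    _ ≤ ∫ y, (1 + ‖y‖) ^ (-N) * ‖L y‖ ^ t ∂μ :=
        setIntegral_le_integral hint (.of_forall fun y => by positivity)

theorem integral_one_add_norm_rpow_mul_norm_rpow_comparison_general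
    (ht : 0 ≤ t) (hN : t + finrank ℝ E < N) :
    ∃ c C : ℝ, 0 < c ∧ 0 < C ∧ ∀ T : E ≃L[ℝ] E,
      c / (‖(T.symm : E →L[ℝ] E)‖⁻¹ ^ t * |(T : E →L[ℝ] E).det|) ≤
          ∫ x, (1 + ‖T x‖) ^ (-N) * ‖x‖ ^ t ∂μ ∧
        ∫ x, (1 + ‖T x‖) ^ (-N) * ‖x‖ ^ t ∂μ ≤
          C / (‖(T.symm : E →L[ℝ] E)‖⁻¹ ^ t * |(T : E →L[ℝ] E).det|) := by
  have hball : 0 < μ.real (ball (0 : E) (1 / 4)) :=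
    ENNReal.toReal_pos (measure_ball_pos μ 0 (by norm_num)).ne' measure_ball_lt_top.ne
  refine ⟨μ.real (ball 0 (1 / 4)) * (9 / 4) ^ (-N) * (1 / 4) ^ t,
    ∫ y, (1 + ‖y‖) ^ (-(N - t)) ∂μ, by positivity,
    integral_one_add_norm_rpow_pos μ (lt_sub_iff_add_lt'.2 hN), fun T => ?_⟩
  have hsubst : ∫ x, (1 + ‖T x‖) ^ (-N) * ‖x‖ ^ t ∂μ =
      |(T : E →L[ℝ] E).det|⁻¹ * ∫ y, (1 + ‖y‖) ^ (-N) * ‖(T.symm : E →L[ℝ] E) y‖ ^ t ∂μ := by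
    simpa using integral_comp_continuousLinearEquiv μ T
      fun y => (1 + ‖y‖) ^ (-N) * ‖T.symm y‖ ^ t
  have hconst (k : ℝ) : k / (‖(T.symm : E →L[ℝ] E)‖⁻¹ ^ t * |(T : E →L[ℝ] E).det|) =
      |(T : E →L[ℝ] E).det|⁻¹ * (k * ‖(T.symm : E →L[ℝ] E)‖ ^ t) := by
    rw [Real.inv_rpow (norm_nonneg _), div_eq_mul_inv, mul_inv, inv_inv]
    ring
  rw [hsubst, hconst, hconst]
  constructor <;> gcongr
  · exact le_integral_one_add_norm_rpow_mul_norm_apply_rpow μ ht hN _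
  · exact integral_one_add_norm_rpow_mul_norm_apply_rpow_le μ ht hN _

end Integrals

lemma det_toEuclideanCLM {𝕜 n : Type*} [RCLike 𝕜] [Fintype n] [DecidableEq n]
    (A : Matrix n n 𝕜) : (Matrix.toEuclideanCLM (𝕜 := 𝕜) A).det = A.det := by
  rw [ContinuousLinearMap.det, Matrix.coe_toEuclideanCLM_eq_toEuclideanLin,
    Matrix.toEuclideanLin_eq_toLin_orthonormal, LinearMap.det_toLin]

lemma exists_continuousLinearEquiv_eq_toEuclideanCLM {𝕜 n : Type*} [RCLike 𝕜] [Fintype n]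
    [DecidableEq n] {A : Matrix n n 𝕜} (hA : IsUnit A.det) :
    ∃ T : EuclideanSpace 𝕜 n ≃L[𝕜] EuclideanSpace 𝕜 n,
      (T : EuclideanSpace 𝕜 n →L[𝕜] EuclideanSpace 𝕜 n) = Matrix.toEuclideanCLM (𝕜 := 𝕜) A ∧
      (T.symm : EuclideanSpace 𝕜 n →L[𝕜] EuclideanSpace 𝕜 n) =
        Matrix.toEuclideanCLM (𝕜 := 𝕜) A⁻¹ := by
  obtain ⟨U, rfl⟩ := (Matrix.isUnit_iff_isUnit_det A).2 hA
  refine ⟨.ofUnit (Units.map (Matrix.toEuclideanCLM (n := n) (𝕜 := 𝕜)).toMonoidHom U), rfl, ?_⟩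
  rw [← Matrix.coe_units_inv]
  rfl

/-- **Proposition 3.5.** Let `d ∈ ℕ`, `t ≥ 0` and `N > t + d`. Then, with constants
depending only on `N, d, t`,
`∫_{ℝ^d} (1 + ‖Tx‖)^{-N} ‖x‖^t dx ≈ (α_d(T)^t |det T|)⁻¹`
for every invertible `d × d` real matrix `T`. -/
theorem integral_one_add_norm_rpow_mul_norm_rpow_comparison
    (d : ℕ) (t N : ℝ) (ht : 0 ≤ t) (hN : t + d < N) :
    ∃ c C : ℝ, 0 < c ∧ 0 < C ∧
      ∀ T : Matrix (Fin d) (Fin d) ℝ, IsUnit T.det →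
        c / (alphaMin T ^ t * |T.det|) ≤
            (∫ x : EuclideanSpace ℝ (Fin d),
              (1 + ‖Matrix.toEuclideanCLM (𝕜 := ℝ) T x‖) ^ (-N) * ‖x‖ ^ t) ∧
          (∫ x : EuclideanSpace ℝ (Fin d),
              (1 + ‖Matrix.toEuclideanCLM (𝕜 := ℝ) T x‖) ^ (-N) * ‖x‖ ^ t) ≤
            C / (alphaMin T ^ t * |T.det|) := by
  obtain ⟨c, C, hc, hC, h⟩ := integral_one_add_norm_rpow_mul_norm_rpow_comparison_general
    (volume : Measure (EuclideanSpace ℝ (Fin d))) ht (by simpa using hN)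
  refine ⟨c, C, hc, hC, fun A hA => ?_⟩
  obtain ⟨T, hT, hT_symm⟩ := exists_continuousLinearEquiv_eq_toEuclideanCLM hA
  simpa only [alphaMin, opNorm, ← ContinuousLinearEquiv.coe_coe, hT, hT_symm, det_toEuclideanCLM]
    using h T

end SelfAffine
end
end

section
/- Let A be a d×d invertible real matrix with ‖A‖ < 1, let 𝒜 be a nonempty finite index set, let {a_I}_{I∈𝒜} be vectors in ℝ^d, and fix J ∈ 𝒜. Let G = { Σ_{k=0}^∞ A^k a_{I_{k+1}} : (I_k)_{k≥1} ∈ 𝒜^ℕ } be the attractor of the IFS {x ↦ Ax + a_I}_{I∈𝒜}. Define E = { Σ_{k=0}^∞ A^k a_{I_{k+1}} : I_{2n+1} ∈ 𝒜 and I_{2n+2} = J for all n ≥ 0 }, F = { Σ_{k=0}^∞ A^k a_{I_{k+1}} : I_{2n+1} = J and I_{2n+2} ∈ 𝒜 for all n ≥ 0 }, and v = −Σ_{k=0}^∞ A^k a_J. Then G = E + F + v, where E + F + v = { x + y + v : x ∈ E, y ∈ F }. -/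
/-!
Interchanging two digit sequences on a set of positions does not change the sum of their values.
Interchanging an arbitrary sequence with the constant sequence `J` on the odd positions splits an
element of `G` into elements of `E` and `F`, and a second interchange undoes this; either way the
constant sequence contributes its sum `-v`.
-/

open MeasureTheory Pointwise

noncomputable section

namespace SelfAffine

theorem tsum_piecewise_add_tsum_piecewise {κ ι M : Type*} [AddCommMonoid M]
    [TopologicalSpace M] [ContinuousAdd M] [T2Space M] {f : κ → ι → M}
    (hf : ∀ s : κ → ι, Summable fun k => f k (s k)) (D : Set κ)
    [∀ k, Decidable (k ∈ D)] (s t : κ → ι) :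
    ∑' k, f k (D.piecewise s t k) + ∑' k, f k (D.piecewise t s k) =
      ∑' k, f k (s k) + ∑' k, f k (t k) := by
  rw [← (hf _).tsum_add (hf _), ← (hf s).tsum_add (hf t)]
  refine tsum_congr fun k => ?_
  by_cases hk : k ∈ D
  · simp only [Set.piecewise_eq_of_mem _ _ _ hk]
  · simp only [Set.piecewise_eq_of_notMem _ _ _ hk, add_comm]

theorem range_tsum_eq_image_add_image_add_singleton {κ ι G : Type*} [AddCommGroup G]
    [TopologicalSpace G] [ContinuousAdd G] [T2Space G] {f : κ → ι → G}
    (hf : ∀ s : κ → ι, Summable fun k => f k (s k)) (D : Set κ) (c : κ → ι) :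
    Set.range (fun s : κ → ι => ∑' k, f k (s k)) =
      (fun s : κ → ι => ∑' k, f k (s k)) '' {s | Set.EqOn s c Dᶜ} +
        (fun s : κ → ι => ∑' k, f k (s k)) '' {s | Set.EqOn s c D} + {-∑' k, f k (c k)} := by
  classical
  refine Set.Subset.antisymm ?_ ?_
  · rintro _ ⟨s, rfl⟩
    refine Set.mem_add.2 ⟨_, Set.add_mem_add
      (Set.mem_image_of_mem _ (D.piecewise_eqOn_compl s c))
      (Set.mem_image_of_mem _ (D.piecewise_eqOn c s)), _, rfl, ?_⟩
    simp only [tsum_piecewise_add_tsum_piecewise hf, add_neg_cancel_right]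
  · rintro _ ⟨_, ⟨_, ⟨t, (ht : Set.EqOn t c Dᶜ), rfl⟩, _, ⟨u, (hu : Set.EqOn u c D), rfl⟩, rfl⟩,
      _, rfl, rfl⟩
    have piecewise_eq_base : D.piecewise u t = c :=
      (Set.eqOn_univ _ _).1 <| (Set.eqOn_piecewise D).2
        ⟨hu.mono Set.inter_subset_right, ht.mono Set.inter_subset_right⟩
    refine ⟨D.piecewise t u, eq_add_neg_of_add_eq ?_⟩
    simpa only [piecewise_eq_base] using tsum_piecewise_add_tsum_piecewise hf D t u

theorem summable_clm_apply_of_isBounded {𝕜 κ E F : Type*} [NontriviallyNormedField 𝕜]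
    [SeminormedAddCommGroup E] [NormedSpace 𝕜 E] [SeminormedAddCommGroup F] [NormedSpace 𝕜 F]
    [CompleteSpace F] {T : κ → E →L[𝕜] F} (hT : Summable fun k => ‖T k‖) {x : κ → E}
    (hx : Bornology.IsBounded (Set.range x)) : Summable fun k => T k (x k) := by
  obtain ⟨C, hC⟩ := hx.exists_norm_le
  exact .of_norm_bounded (hT.mul_right C) fun k =>
    (T k).le_opNorm_of_le (hC _ (Set.mem_range_self k))

theorem attractor_eq_add_add_singleton_general {𝕜 E ι : Type*} [NontriviallyNormedField 𝕜]
    [NormedAddCommGroup E] [NormedSpace 𝕜 E] [CompleteSpace E] (T : E →L[𝕜] E)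
    (hT : Summable fun k : ℕ => ‖T ^ k‖) (a : ι → E) (ha : Bornology.IsBounded (Set.range a))
    (J : ι) :
    {x : E | ∃ s : ℕ → ι, x = ∑' k : ℕ, (T ^ k) (a (s k))} =
      {x : E | ∃ s : ℕ → ι, (∀ n : ℕ, s (2 * n + 1) = J) ∧ x = ∑' k : ℕ, (T ^ k) (a (s k))} +
        {x : E | ∃ s : ℕ → ι, (∀ n : ℕ, s (2 * n) = J) ∧ x = ∑' k : ℕ, (T ^ k) (a (s k))} +
        {-∑' k : ℕ, (T ^ k) (a J)} := by
  have summable_digits (s : ℕ → ι) : Summable fun k => (T ^ k) (a (s k)) :=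
    summable_clm_apply_of_isBounded hT (ha.subset (Set.range_comp_subset_range s a))
  have eqOn_even (s : ℕ → ι) :
      Set.EqOn s (fun _ => J) {k | Even k} ↔ ∀ n : ℕ, s (2 * n) = J := by
    simp [Set.EqOn, even_iff_exists_two_mul]
  have eqOn_odd (s : ℕ → ι) :
      Set.EqOn s (fun _ => J) {k | Even k}ᶜ ↔ ∀ n : ℕ, s (2 * n + 1) = J := by
    simp [Set.EqOn, Nat.isCompl_even_odd.compl_eq, Odd]
  have decomposition := range_tsum_eq_image_add_image_add_singleton
    (f := fun k i => (T ^ k) (a i)) summable_digits {k | Even k} fun _ => J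
  simpa only [Set.range, Set.image, Set.mem_ofPred_eq, eqOn_even, eqOn_odd, eq_comm]
    using decomposition

/-- **The decomposition `G = E + F + v` in the proof of Theorem 1.3.**
Let `A` be an invertible `d × d` real matrix with `‖A‖ < 1`, let `𝒜` be a nonempty
finite index set, `{a_I}_{I ∈ 𝒜}` vectors in `ℝ^d`, and fix `J ∈ 𝒜`. Let
`G = { ∑_{k≥0} A^k a_{I_{k+1}} : (I_k)_{k≥1} ∈ 𝒜^ℕ }` be the attractor of the IFS
`{x ↦ Ax + a_I}_{I ∈ 𝒜}`, let `E` (resp. `F`) be the subset of such sums over sequences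
with `I_{2n+2} = J` (resp. `I_{2n+1} = J`) for all `n ≥ 0`, and let
`v = −∑_{k≥0} A^k a_J`. Then `G = E + F + {v}` (pointwise set addition). -/
theorem attractor_eq_add_add_singleton {d : ℕ}
    (A : Matrix (Fin d) (Fin d) ℝ) (hA : IsUnit A.det) (hAnorm : opNorm A < 1)
    (ι : Type*) [Fintype ι] [Nonempty ι]
    (a : ι → EuclideanSpace ℝ (Fin d)) (J : ι) :
    { x : EuclideanSpace ℝ (Fin d) | ∃ s : ℕ → ι,
        x = ∑' k : ℕ, Matrix.toEuclideanCLM (𝕜 := ℝ) (A ^ k) (a (s k)) } =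
      { x : EuclideanSpace ℝ (Fin d) | ∃ s : ℕ → ι, (∀ n : ℕ, s (2 * n + 1) = J) ∧
          x = ∑' k : ℕ, Matrix.toEuclideanCLM (𝕜 := ℝ) (A ^ k) (a (s k)) } +
        { x : EuclideanSpace ℝ (Fin d) | ∃ s : ℕ → ι, (∀ n : ℕ, s (2 * n) = J) ∧
            x = ∑' k : ℕ, Matrix.toEuclideanCLM (𝕜 := ℝ) (A ^ k) (a (s k)) } +
        ({ -∑' k : ℕ, Matrix.toEuclideanCLM (𝕜 := ℝ) (A ^ k) (a J) } :
          Set (EuclideanSpace ℝ (Fin d))) := by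
  have summable_norm_pow : Summable fun k : ℕ => ‖Matrix.toEuclideanCLM (𝕜 := ℝ) A ^ k‖ := by
    simpa only [pow_zero, one_mul] using
      summable_norm_pow_mul_geometric_of_norm_lt_one 0 hAnorm
  simpa only [map_pow] using attractor_eq_add_add_singleton_general _ summable_norm_pow a
    (Set.finite_range a).isBounded J

end SelfAffine
end
end
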